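/- arXiv:1612.01732 — 2 statements merged into one kernel-verified Lean document; each statement's English description precedes it below -/
import Mathlib

section
/- Let Λ be a finite simple graph, u a vertex of Λ of degree at least 2, and w₁, w₂ two distinct vertices adjacent to u. Then there is an injective group homomorphism from G(Λ) into G(Λ_u⁻(w₁,w₂)). -/
open SimpleGraph

/-- The set of commutator relations of a graph: one commutator for each edge. -/
def raagRels {V : Type} (G : SimpleGraph V) : Set (FreeGroup V) :=
  {r | ∃ u v : V, G.Adj u v ∧
    r = FreeGroup.of u * FreeGroup.of v * (FreeGroup.of u)⁻¹ * (FreeGroup.of v)⁻¹}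

/-- The right-angled Artin group `A(G)` of a graph `G`. -/
abbrev RAAG {V : Type} (G : SimpleGraph V) : Type := PresentedGroup (raagRels G)

/-- `G(Γ) = A(Γᶜ)`, the RAAG on the complement graph. -/
abbrev GG {V : Type} (G : SimpleGraph V) : Type := RAAG Gᶜ

/-- A linear forest: an acyclic graph all of whose vertices have degree at most 2. -/
def IsLinearForest {V : Type} (G : SimpleGraph V) : Prop :=
  G.IsAcyclic ∧ ∀ v : V, (G.neighborSet v).ncard ≤ 2

/-- The star of a vertex: the vertex together with its neighbours. -/
def starSet {V : Type} (G : SimpleGraph V) (v : V) : Set V :=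
  insert v (G.neighborSet v)

/-- The double `D_v(G)` of `G` along the star of `v`: original vertices together with
copies of the vertices outside the star. -/
def GraphDouble {V : Type} (G : SimpleGraph V) (v : V) :
    SimpleGraph (V ⊕ {w : V // w ∉ starSet G v}) :=
  SimpleGraph.fromRel (fun x y =>
    match x, y with
    | Sum.inl a, Sum.inl b => G.Adj a b
    | Sum.inr a, Sum.inr b => G.Adj a.1 b.1
    | Sum.inl a, Sum.inr b => a ∈ starSet G v ∧ G.Adj a b.1
    | Sum.inr _, Sum.inl _ => False)

/-- Subdivision of the edge `[v,w]` of `Λ`, with `none` as the new vertex. -/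
def SubdivEdge {V : Type} (Λ : SimpleGraph V) (v w : V) : SimpleGraph (Option V) :=
  SimpleGraph.fromRel (fun x y =>
    match x, y with
    | some a, some b => Λ.Adj a b ∧ ¬((a = v ∧ b = w) ∨ (a = w ∧ b = v))
    | some a, none => a = v ∨ a = w
    | none, some _ => False
    | none, none => False)

/-- The graph `Λ_u⁻(w₁,w₂)`, with `none` as the new vertex `v`. -/
def MinusGraph {V : Type} (Λ : SimpleGraph V) (u w₁ w₂ : V) : SimpleGraph (Option V) :=
  SimpleGraph.fromRel (fun x y =>
    match x, y with
    | some a, some b => Λ.Adj a b ∧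
        ¬((a = u ∧ b = w₁) ∨ (a = w₁ ∧ b = u) ∨ (a = u ∧ b = w₂) ∨ (a = w₂ ∧ b = u))
    | some a, none => a = w₁ ∨ a = u ∨ a = w₂
    | none, some _ => False
    | none, none => False)

/-- The graph `Λ_u⁺(w₁,w₂)`: `Λ_u⁻(w₁,w₂)` with the edge `[u,w₂]` added back. -/
def PlusGraph {V : Type} (Λ : SimpleGraph V) (u w₁ w₂ : V) : SimpleGraph (Option V) :=
  SimpleGraph.fromRel (fun x y =>
    (MinusGraph Λ u w₁ w₂).Adj x y ∨ (x = some u ∧ y = some w₂))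

/-!
Write `G = G(Λ)` and let `v` be the new vertex. Deleting the edges from `u` to `w₁, w₂` makes `u`
commute with them in `G(Λ_u⁻)`, but `v` commutes with none of `u, w₁, w₂`, so one may hope to
recover `G` by sending `u` to `v u v⁻¹` and fixing the other generators. To see that this map is
injective, send `G(Λ_u⁻)` to `(G × G) ⋊ ℤ`, where `ℤ` swaps the two factors: `v` goes to the
generator of `ℤ`, `u` to `(1, u)`, the `wᵢ` to `(wᵢ, 1)`, and every other `y` to `(y, y)`. The
conjugate `v u v⁻¹` then goes to `(u, 1)`, so the composite `G → G × G` is the identity in the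
first coordinate. The same argument works for any set `W` of neighbours of `u` in place of
`{w₁, w₂}`.
-/

namespace RAAG

variable {V : Type} {G : SimpleGraph V}

/-- The standard generator of `A(G)` given by a vertex. -/
abbrev of (G : SimpleGraph V) (a : V) : RAAG G := PresentedGroup.of a

theorem commute_of {a b : V} (h : G.Adj a b) : Commute (of G a) (of G b) := by
  have commutator_eq_one :
      PresentedGroup.mk (raagRels G) (.of a * .of b * (.of a)⁻¹ * (.of b)⁻¹) = 1 :=
    PresentedGroup.one_of_mem ⟨a, b, h, rfl⟩
  simp only [map_mul, map_inv] at commutator_eq_one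
  exact mul_inv_eq_iff_eq_mul.mp (mul_inv_eq_one.mp commutator_eq_one)

section Lift

variable {H : Type*} [Group H]

/-- The universal property of `A(G)`: a map on vertices under which adjacent vertices have commuting
images extends to a homomorphism. -/
def lift (f : V → H) (hf : ∀ a b, G.Adj a b → Commute (f a) (f b)) : RAAG G →* H :=
  PresentedGroup.toGroup (f := f) <| by
    rintro _ ⟨a, b, hab, rfl⟩
    simp [(hf a b hab).eq]

@[simp]
theorem lift_of (f : V → H) (hf : ∀ a b, G.Adj a b → Commute (f a) (f b)) (a : V) :
    lift f hf (of G a) = f a :=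
  PresentedGroup.toGroup.of _

end Lift

theorem commute_mulIndicator_of {s : Set V} {a b : V} (h : a ∈ s → b ∈ s → G.Adj a b) :
    Commute (s.mulIndicator (of G) a) (s.mulIndicator (of G) b) := by
  by_cases ha : a ∈ s
  · by_cases hb : b ∈ s
    · simpa only [Set.mulIndicator_of_mem, ha, hb] using commute_of (h ha hb)
    · simp only [Set.mulIndicator_of_notMem hb, Commute.one_right]
  · simp only [Set.mulIndicator_of_notMem ha, Commute.one_left]

/-- The retraction of `A(G)` onto the subgroup generated by the vertices in `s`, killing all other
vertices. -/
noncomputable def retract (G : SimpleGraph V) (s : Set V) : RAAG G →* RAAG G :=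
  lift (s.mulIndicator (of G)) fun _ _ hab => commute_mulIndicator_of fun _ _ => hab

end RAAG

/-- The semidirect product `(G × G) ⋊ ℤ` in which the generator of `ℤ` swaps the two factors. -/
abbrev SwapProduct (G : Type*) [Group G] : Type _ :=
  (G × G) ⋊[zpowersHom (MulAut (G × G)) MulEquiv.prodComm] Multiplicative ℤ

namespace SwapProduct

variable {G : Type*} [Group G]

/-- The inclusion of the base group `G × G` of `SwapProduct G`. -/
abbrev base : G × G →* SwapProduct G := SemidirectProduct.inl

/-- The generator of `ℤ` in `SwapProduct G`. -/
abbrev swap : SwapProduct G := SemidirectProduct.inr (Multiplicative.ofAdd 1)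

theorem swap_mul_base_mul_inv (g h : G) : swap * base (g, h) * swap⁻¹ = base (h, g) := by
  simpa using (SemidirectProduct.inl_aut
    (φ := zpowersHom (MulAut (G × G)) MulEquiv.prodComm) (Multiplicative.ofAdd 1) (g, h)).symm

theorem commute_swap_base_diag (g : G) : Commute swap (base (g, g)) :=
  mul_inv_eq_iff_eq_mul.mp (swap_mul_base_mul_inv g g)

end SwapProduct

/-- The graph `Λ_u⁻(W)`: the edges from `u` to `W` are deleted, and a new vertex `none` is joined to
`u` and to every vertex of `W`. For `W = {w₁, w₂}` this is `MinusGraph Λ u w₁ w₂`. -/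
def detachGraph {V : Type} (Λ : SimpleGraph V) (u : V) (W : Set V) : SimpleGraph (Option V) where
  Adj
    | some a, some b => Λ.Adj a b ∧ ¬(a = u ∧ b ∈ W) ∧ ¬(b = u ∧ a ∈ W)
    | some a, none => a = u ∨ a ∈ W
    | none, some b => b = u ∨ b ∈ W
    | none, none => False
  symm := ⟨by
    rintro (_ | a) (_ | b) h
    exacts [h, h, h, ⟨h.1.symm, h.2.2, h.2.1⟩]⟩
  loopless := ⟨by
    rintro (_ | a) h
    exacts [h, Λ.irrefl h.1]⟩

namespace detachGraph

open RAAG SwapProduct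

variable {V : Type} {Λ : SimpleGraph V} {u : V} {W : Set V}

theorem pair_eq_minusGraph (Λ : SimpleGraph V) (u w₁ w₂ : V) :
    detachGraph Λ u {w₁, w₂} = MinusGraph Λ u w₁ w₂ := by
  ext (_ | a) (_ | b)
  · simp [detachGraph, MinusGraph]
  · simp [detachGraph, MinusGraph, or_left_comm]
  · simp [detachGraph, MinusGraph, or_left_comm]
  · have := Λ.ne_of_adj (a := a) (b := b)
    simp only [detachGraph, MinusGraph, fromRel_adj, Λ.adj_comm b a, Set.mem_insert_iff,
      Set.mem_singleton_iff, ne_eq, Option.some_inj]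
    tauto

theorem compl_adj_none_some {b : V} :
    (detachGraph Λ u W)ᶜ.Adj none (some b) ↔ b ≠ u ∧ b ∉ W := by
  simp [detachGraph]

theorem compl_adj_some_some {a b : V} :
    (detachGraph Λ u W)ᶜ.Adj (some a) (some b) ↔
      a ≠ b ∧ (Λ.Adj a b → a = u ∧ b ∈ W ∨ b = u ∧ a ∈ W) := by
  simp only [detachGraph, compl_adj, ne_eq, Option.some_inj]
  tauto

/-- The image of the generator `u` under `embedding`: its conjugate by the new vertex. -/
abbrev conjOf (Λ : SimpleGraph V) (u : V) (W : Set V) : GG (detachGraph Λ u W) :=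
  of _ none * of _ (some u) * (of _ none)⁻¹

theorem commute_conjOf {b : V} (hW : W ⊆ Λ.neighborSet u) (h : Λᶜ.Adj u b) :
    Commute (conjOf Λ u W) (of _ (some b)) := by
  rw [compl_adj] at h
  have commute_none : Commute (of (detachGraph Λ u W)ᶜ none) (of _ (some b)) :=
    commute_of <| compl_adj_none_some.mpr ⟨h.1.symm, fun hb => h.2 (hW hb)⟩
  have commute_some : Commute (of (detachGraph Λ u W)ᶜ (some u)) (of _ (some b)) :=
    commute_of <| compl_adj_some_some.mpr ⟨h.1, fun hub => absurd hub h.2⟩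
  exact (commute_none.mul_left commute_some).mul_left commute_none.inv_left

open scoped Classical in
/-- The homomorphism `G(Λ) → G(Λ_u⁻(W))` conjugating `u` by the new vertex and fixing the other
vertices. -/
noncomputable def embedding (hW : W ⊆ Λ.neighborSet u) : GG Λ →* GG (detachGraph Λ u W) :=
  lift (Function.update (fun a => of _ (some a)) u (conjOf Λ u W)) <| by
    intro a b hab
    rcases eq_or_ne a u with rfl | ha
    · simpa [hab.ne'] using commute_conjOf hW hab
    rcases eq_or_ne b u with rfl | hb
    · simpa [ha] using (commute_conjOf hW hab.symm).symm
    simpa [ha, hb] using commute_of <| compl_adj_some_some.mpr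
      ⟨hab.ne, fun h => absurd h ((compl_adj _ _ _).mp hab).2⟩

/-- The images of the vertices under `toSwapProduct`: the new vertex swaps the factors, while an old
vertex acts in the first factor unless it is `u` and in the second unless it lies in `W`. -/
noncomputable def swapProductOf (Λ : SimpleGraph V) (u : V) (W : Set V) :
    Option V → SwapProduct (GG Λ)
  | none => swap
  | some a => base (({u}ᶜ : Set V).mulIndicator (of Λᶜ) a, Wᶜ.mulIndicator (of Λᶜ) a)

theorem commute_swapProductOf_none_some {b : V} (hu : b ≠ u) (hW : b ∉ W) :
    Commute (swapProductOf Λ u W none) (swapProductOf Λ u W (some b)) := by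
  simpa [swapProductOf, hu, hW] using commute_swap_base_diag (of Λᶜ b)

theorem commute_swapProductOf_some_some {a b : V}
    (h : (detachGraph Λ u W)ᶜ.Adj (some a) (some b)) :
    Commute (swapProductOf Λ u W (some a)) (swapProductOf Λ u W (some b)) := by
  obtain ⟨hab, deleted⟩ := compl_adj_some_some.mp h
  refine (Commute.prod (commute_mulIndicator_of fun ha hb => ?_)
    (commute_mulIndicator_of fun ha hb => ?_)).map base
  all_goals
    simp only [Set.mem_compl_iff, Set.mem_singleton_iff] at ha hb
    exact (compl_adj _ _ _).mpr ⟨hab, by tauto⟩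

/-- The homomorphism `G(Λ_u⁻(W)) → (G(Λ) × G(Λ)) ⋊ ℤ` extending `swapProductOf`. -/
noncomputable def toSwapProduct (Λ : SimpleGraph V) (u : V) (W : Set V) :
    GG (detachGraph Λ u W) →* SwapProduct (GG Λ) :=
  lift (swapProductOf Λ u W) <| by
    rintro (_ | a) (_ | b) hab
    · exact Commute.refl _
    · obtain ⟨hu, hW⟩ := compl_adj_none_some.mp hab
      exact commute_swapProductOf_none_some hu hW
    · obtain ⟨hu, hW⟩ := compl_adj_none_some.mp hab.symm
      exact (commute_swapProductOf_none_some hu hW).symm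
    · exact commute_swapProductOf_some_some hab

theorem toSwapProduct_conjOf (hu : u ∉ W) :
    toSwapProduct Λ u W (conjOf Λ u W) = base (of Λᶜ u, 1) := by
  simpa [toSwapProduct, swapProductOf, hu] using swap_mul_base_mul_inv 1 (of Λᶜ u)

theorem toSwapProduct_comp_embedding (hW : W ⊆ Λ.neighborSet u) :
    (toSwapProduct Λ u W).comp (embedding hW) =
      base.comp ((MonoidHom.id _).prod (retract Λᶜ (insert u W)ᶜ)) := by
  refine PresentedGroup.ext fun a => ?_
  rcases eq_or_ne a u with rfl | ha
  · have huW : a ∉ W := fun h => Λ.irrefl (hW h)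
    simpa [embedding, retract] using toSwapProduct_conjOf huW
  · by_cases haW : a ∈ W <;> simp [embedding, toSwapProduct, swapProductOf, retract, ha, haW]

theorem embedding_injective (hW : W ⊆ Λ.neighborSet u) : Function.Injective (embedding hW) := by
  have comp_injective : Function.Injective ((toSwapProduct Λ u W).comp (embedding hW)) := by
    rw [toSwapProduct_comp_embedding]
    exact SemidirectProduct.inl_injective.comp fun _ _ h => congrArg Prod.fst h
  exact Function.Injective.of_comp comp_injective

end detachGraph

theorem statement14_general {V : Type} (Λ : SimpleGraph V) (u : V) (W : Set V)
    (hW : W ⊆ Λ.neighborSet u) :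
    ∃ φ : GG Λ →* GG (detachGraph Λ u W), Function.Injective φ :=
  ⟨detachGraph.embedding hW, detachGraph.embedding_injective hW⟩

/-- `G(Λ)` embeds into `G(Λ_u⁻(w₁,w₂))`. -/
theorem statement14 {V : Type} [Fintype V] (Λ : SimpleGraph V) (u w₁ w₂ : V)
    (hdeg : 2 ≤ (Λ.neighborSet u).ncard) (hne : w₁ ≠ w₂)
    (h1 : Λ.Adj u w₁) (h2 : Λ.Adj u w₂) :
    ∃ φ : GG Λ →* GG (MinusGraph Λ u w₁ w₂), Function.Injective φ :=
  detachGraph.pair_eq_minusGraph Λ u w₁ w₂ ▸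
    statement14_general Λ u {w₁, w₂} (Set.pair_subset h1 h2)
end

section
/- Suppose Λ is a finite simple graph whose maximum vertex degree equals 3, and for every vertex x of degree 3 in Λ, no two neighbors of x are adjacent to each other (i.e., the link of x contains no edge). Then there exists a finite simple graph Γ such that there is an injective group homomorphism from G(Λ) into G(Γ), but Λ does not embed into Γ as a full (induced) subgraph. -/
open SimpleGraph

/-!
The point is that contracting connected subgraphs of `Γ` never leaves the realm of subgroups of
`G(Γ)`, while it can create vertices with three pairwise non-adjacent neighbours.

*Contracting one edge.* Let `q` and `p` be adjacent in `Γ` and let `H` be the group `G` of the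
contraction of `qp`, whose merged vertex is again called `p`. Sending `p` to `q⁻¹ p q` and every
other generator to itself defines `H → G(Γ)`. It is injective because `G(Γ)` acts on two copies of
`H`, called sheets: `q` exchanges the sheets, `p` translates the second sheet only, and the other
generators translate the first sheet, and also the second one if they commute with `q`. Conjugation
by the swap carries the translation by `p` to the first sheet, so `H` acts there by left
translation.

*Contracting everything.* Iterating, `G(Γ.map π)` embeds in `G(Γ)` whenever `π` has connected
fibres. Now blow up each vertex `v` of `Λ` to a clique and let distinct edges of `Λ` at `v` end at
distinct vertices of this clique. Contracting the cliques gives `Λ` back, but the neighbourhood of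
a vertex in the blow-up is a clique together with at most one further vertex, so the blow-up has no
induced claw, whereas `Λ` has one.
-/

namespace GG

variable {V : Type} {Λ : SimpleGraph V} {H : Type*} [Group H]

/-- The generator of `GG Λ` attached to the vertex `v`. -/
def gen (Λ : SimpleGraph V) (v : V) : GG Λ := PresentedGroup.of v

theorem closure_range_gen (Λ : SimpleGraph V) : Subgroup.closure (Set.range (gen Λ)) = ⊤ :=
  PresentedGroup.closure_range_of _

theorem commute_gen {v w : V} (h : ¬ Λ.Adj v w) : Commute (gen Λ v) (gen Λ w) := by
  obtain rfl | hvw := eq_or_ne v w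
  · exact Commute.refl _
  · exact commutatorElement_eq_one_iff_commute.1
      (PresentedGroup.one_of_mem ⟨v, w, ⟨hvw, h⟩, rfl⟩)

/-- The universal property of `GG Λ`: the homomorphism extending `f` on the generators. -/
def lift (f : V → H) (hf : ∀ ⦃v w⦄, v ≠ w → ¬ Λ.Adj v w → Commute (f v) (f w)) : GG Λ →* H :=
  PresentedGroup.toGroup (f := f) <| by
    rintro _ ⟨v, w, ⟨hvw, h⟩, rfl⟩
    simp [(hf hvw h).eq]

@[simp]
theorem lift_gen (f : V → H) (hf : ∀ ⦃v w⦄, v ≠ w → ¬ Λ.Adj v w → Commute (f v) (f w)) (v : V) :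
    lift f hf (gen Λ v) = f v :=
  PresentedGroup.toGroup.of _

end GG

theorem injective_of_equivariant_on_generators {G X : Type*} [Group G] {S : Set G}
    (hS : Subgroup.closure S = ⊤) (ρ : G →* Equiv.Perm X) {ι : G → X} (hι : Function.Injective ι)
    (h : ∀ s ∈ S, ∀ g, ρ s (ι g) = ι (s * g)) : Function.Injective ρ := by
  have equivariant (g : G) : ∀ x, ρ g (ι x) = ι (g * x) := by
    induction hS ▸ Subgroup.mem_top g using Subgroup.closure_induction with
    | mem s hs => exact h s hs
    | one => simp
    | mul a b _ _ ha hb => simp [ha, hb, mul_assoc]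
    | inv a _ ha => intro x; rw [map_inv, Equiv.Perm.inv_eq_iff_eq, ha, mul_inv_cancel_left]
  intro a b hab
  have : ι (a * 1) = ι (b * 1) := by rw [← equivariant, hab, equivariant]
  simpa using hι this

/-- The action of `H × H` on two disjoint copies of `H` by left translation, the first factor on
the first copy and the second factor on the second. -/
def sheetAction (H : Type*) [Group H] : H × H →* Equiv.Perm (H ⊕ H) :=
  (Equiv.Perm.sumCongrHom H H).comp
    ((MulAction.toPermHom H H).prodMap (MulAction.toPermHom H H))

@[simp]
theorem sheetAction_inl {H : Type*} [Group H] (a : H × H) (x : H) :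
    sheetAction H a (Sum.inl x) = Sum.inl (a.1 * x) :=
  rfl

@[simp]
theorem sheetAction_inr {H : Type*} [Group H] (a : H × H) (x : H) :
    sheetAction H a (Sum.inr x) = Sum.inr (a.2 * x) :=
  rfl

theorem commute_sumComm_sheetAction {H : Type*} [Group H] (a : H) :
    Commute (Equiv.sumComm H H : Equiv.Perm (H ⊕ H)) (sheetAction H (a, a)) := by
  ext (x | x) <;> simp

section Collapse

variable {W : Type*} {Γ : SimpleGraph W} {q : W} {p : {w // w ≠ q}}

open scoped Classical in
/-- The map identifying the vertex `q` with `p` and fixing all others. If `p` and `q` are adjacent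
in `Γ`, then `Γ.map (collapse p)` is the contraction of the edge between them. -/
noncomputable def collapse (p : {w // w ≠ q}) (w : W) : {w // w ≠ q} :=
  if h : w = q then p else ⟨w, h⟩

theorem collapse_eq_iff {w : W} {a : {w // w ≠ q}} :
    collapse p w = a ↔ w = a ∨ w = q ∧ a = p := by
  grind [collapse]

theorem collapse_surjective (p : {w // w ≠ q}) : Function.Surjective (collapse p) :=
  fun a ↦ ⟨a, collapse_eq_iff.2 (.inl rfl)⟩

theorem map_collapse_adj {a b : {w // w ≠ q}} :
    (Γ.map (collapse p)).Adj a b ↔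
      a ≠ b ∧ (Γ.Adj a b ∨ a = p ∧ Γ.Adj q b ∨ b = p ∧ Γ.Adj a q) := by
  simp only [map_adj', collapse_eq_iff]
  grind [SimpleGraph.irrefl]

theorem comp_collapse {V : Type*} {π : W → V} (h : π q = π p) :
    π ∘ Subtype.val ∘ collapse p = π := by
  ext w
  by_cases hw : w = q <;> simp [collapse, hw, h]

end Collapse

namespace GG

section EdgeContraction

variable {W : Type} {Γ : SimpleGraph W} {q : W} {p : {w // w ≠ q}}

open scoped Classical in
/-- The homomorphism from the group of the contraction of the edge `qp` to the group of `Γ` that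
conjugates the generator of the merged vertex `p` by `q`. -/
noncomputable def ofCollapse (Γ : SimpleGraph W) (p : {w // w ≠ q}) :
    GG (Γ.map (collapse p)) →* GG Γ :=
  lift (fun a ↦ if a = p then (gen Γ q)⁻¹ * gen Γ p * gen Γ q else gen Γ a) <| by
    have commute_conj {b : {w // w ≠ q}} (hp : ¬ Γ.Adj p b) (hq : ¬ Γ.Adj q b) :
        Commute ((gen Γ q)⁻¹ * gen Γ p * gen Γ q) (gen Γ b) :=
      ((commute_gen hq).inv_left.mul_left (commute_gen hp)).mul_left (commute_gen hq)
    intro a b hab h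
    simp only [map_collapse_adj, not_and, not_or, Γ.adj_comm _ q] at h
    obtain ⟨hadj, ha, hb⟩ := h hab
    split_ifs with hap hbp hbp
    · exact absurd (hap.trans hbp.symm) hab
    · exact commute_conj (hap ▸ hadj) (ha hap)
    · exact (commute_conj (hbp ▸ hadj ∘ Adj.symm) (hb hbp)).symm
    · exact commute_gen hadj

open scoped Classical in
/-- The pair of translations by which the generator of a vertex `a ≠ q` of `Γ` acts on the two
sheets, that is, on the two copies of the group of the contraction. The two components must agree
when `a` commutes with `q`, which exchanges the sheets; otherwise only one of them is nontrivial. -/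
noncomputable def sheetTranslation (Γ : SimpleGraph W) (p a : {w // w ≠ q}) :
    GG (Γ.map (collapse p)) × GG (Γ.map (collapse p)) :=
  (if a = p then 1 else gen _ a, if a = p ∨ ¬ Γ.Adj q a then gen _ a else 1)

theorem commute_sheetTranslation {a b : {w // w ≠ q}} (h : ¬ Γ.Adj a b) :
    Commute (sheetTranslation Γ p a) (sheetTranslation Γ p b) := by
  have commute_of (hab : ¬ (Γ.map (collapse p)).Adj a b) :
      Commute (gen (Γ.map (collapse p)) a) (gen _ b) := commute_gen hab
  simp only [map_collapse_adj, Γ.adj_comm _ q] at commute_of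
  refine Commute.prod ?_ ?_ <;> dsimp only [sheetTranslation] <;> split_ifs <;>
    first | exact Commute.one_left _ | exact Commute.one_right _ | exact commute_of (by grind)

open scoped Classical in
/-- The action of `GG Γ` on the two sheets: `q` exchanges them and the other generators
act by translations. -/
noncomputable def sheetPerm (hpq : Γ.Adj q p) :
    GG Γ →* Equiv.Perm (GG (Γ.map (collapse p)) ⊕ GG (Γ.map (collapse p))) :=
  lift (fun w ↦ if h : w = q then Equiv.sumComm _ _
    else sheetAction _ (sheetTranslation Γ p ⟨w, h⟩)) <| by
    have commute_swap {b : {w // w ≠ q}} (hb : ¬ Γ.Adj q b) :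
        Commute (Equiv.sumComm _ _ : Equiv.Perm _)
          (sheetAction _ (sheetTranslation Γ p b)) := by
      have hbp : b ≠ p := by rintro rfl; exact hb hpq
      simpa [sheetTranslation, hb, hbp] using commute_sumComm_sheetAction (gen _ b)
    intro u w huw h
    split_ifs with hu hw hw
    · exact absurd (hu.trans hw.symm) huw
    · exact commute_swap (b := ⟨w, hw⟩) fun hq ↦ h (hu.symm ▸ hq)
    · exact (commute_swap (b := ⟨u, hu⟩) fun hq ↦ h (hw.symm ▸ hq.symm)).symm
    · exact (commute_sheetTranslation (a := ⟨u, hu⟩) (b := ⟨w, hw⟩) h).map _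

@[simp]
theorem sheetPerm_gen_self (hpq : Γ.Adj q p) :
    sheetPerm hpq (gen Γ q) = Equiv.sumComm _ _ := by
  simp [sheetPerm]

@[simp]
theorem sheetPerm_gen (hpq : Γ.Adj q p) (a : {w // w ≠ q}) :
    sheetPerm hpq (gen Γ a) = sheetAction _ (sheetTranslation Γ p a) := by
  simp [sheetPerm, a.2]

theorem sheetPerm_ofCollapse_gen_inl (hpq : Γ.Adj q p) (a : {w // w ≠ q})
    (g : GG (Γ.map (collapse p))) :
    sheetPerm hpq (ofCollapse Γ p (gen _ a)) (Sum.inl g) = Sum.inl (gen _ a * g) := by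
  by_cases hap : a = p <;> simp [ofCollapse, sheetTranslation, hap]

theorem ofCollapse_injective (hpq : Γ.Adj q p) : Function.Injective (ofCollapse Γ p) := by
  refine Function.Injective.of_comp (f := sheetPerm hpq) ?_
  rw [← MonoidHom.coe_comp]
  refine injective_of_equivariant_on_generators (closure_range_gen _) _ Sum.inl_injective ?_
  rintro _ ⟨a, rfl⟩ g
  exact sheetPerm_ofCollapse_gen_inl hpq a g

end EdgeContraction

end GG

theorem GG.exists_injective_of_iso {V W : Type} {Λ : SimpleGraph V} {Γ : SimpleGraph W}
    (e : Λ ≃g Γ) : ∃ φ : GG Λ →* GG Γ, Function.Injective φ := by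
  let φ : GG Λ →* GG Γ := lift (fun v ↦ gen Γ (e v))
    fun v w _ h ↦ commute_gen (mt e.map_adj_iff.1 h)
  let ψ : GG Γ →* GG Λ := lift (fun w ↦ gen Λ (e.symm w))
    fun v w _ h ↦ commute_gen (mt e.symm.map_adj_iff.1 h)
  have hψφ : ψ.comp φ = MonoidHom.id _ := PresentedGroup.ext fun v ↦ by
    change ψ (φ (gen Λ v)) = gen Λ v
    simp [φ, ψ]
  exact ⟨φ, Function.LeftInverse.injective (g := ψ) (DFunLike.congr_fun hψφ)⟩

theorem connected_map_of_surjective {W V : Type*} {G : SimpleGraph W} {f : W → V}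
    (hf : Function.Surjective f) (hG : G.Connected) : (G.map f).Connected := by
  have : Nonempty V := hG.nonempty.map f
  refine ⟨hf.forall₂.2 fun u v ↦ ?_⟩
  have h := (reachable_iff_reflTransGen u v).1 (hG.preconnected u v)
  refine (reachable_iff_reflTransGen _ _).2 (h.lift' f fun a b hab ↦ ?_)
  obtain heq | hne := eq_or_ne (f a) (f b)
  · rw [Function.onFun, heq]
  · exact .single (map_adj_apply' hab hne)

theorem connected_fiber_map {U W V : Type*} {Γ : SimpleGraph U} {κ : U → W} {π : W → V}
    (hκ : Function.Surjective κ) {v : V} (h : (Γ.induce (π ∘ κ ⁻¹' {v})).Connected) :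
    ((Γ.map κ).induce (π ⁻¹' {v})).Connected := by
  let f : (π ∘ κ ⁻¹' {v} : Set U) → (π ⁻¹' {v} : Set W) := fun u ↦ ⟨κ u, u.2⟩
  have hf : Function.Surjective f := fun ⟨w, hw⟩ ↦ by
    obtain ⟨u, rfl⟩ := hκ w
    exact ⟨⟨u, hw⟩, rfl⟩
  refine (connected_map_of_surjective hf h).mono ?_
  rintro _ _ ⟨hne, u, u', hadj, rfl, rfl⟩
  exact map_adj_apply' hadj (Subtype.coe_injective.ne hne)

theorem exists_adj_of_not_injective {V W : Type*} {Γ : SimpleGraph W} {π : W → V}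
    (hπ : ∀ v, (Γ.induce (π ⁻¹' {v})).Connected) (hinj : ¬ Function.Injective π) :
    ∃ q p, Γ.Adj q p ∧ π q = π p := by
  obtain ⟨q, w, hqw, hne⟩ := Function.not_injective_iff.1 hinj
  let q' : π ⁻¹' {π q} := ⟨q, rfl⟩
  have : Nontrivial (π ⁻¹' {π q}) := ⟨q', ⟨w, hqw.symm⟩, fun h ↦ hne (congrArg Subtype.val h)⟩
  obtain ⟨p, hqp⟩ := (hπ (π q)).preconnected.exists_adj_of_nontrivial q'
  exact ⟨q, p, hqp, p.2.symm⟩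

theorem GG.exists_injective_of_connected_fibers {V W : Type} [Finite W] (Γ : SimpleGraph W)
    (π : W → V) (hπ : ∀ v, (Γ.induce (π ⁻¹' {v})).Connected) :
    ∃ φ : GG (Γ.map π) →* GG Γ, Function.Injective φ := by
  induction hn : Nat.card W using Nat.strong_induction_on generalizing W with
  | _ n ih =>
  by_cases hinj : Function.Injective π
  · have hsurj : Function.Surjective π := fun v ↦ (hπ v).nonempty.elim fun w ↦ ⟨w, w.2⟩
    exact exists_injective_of_iso (Iso.map (Equiv.ofBijective π ⟨hinj, hsurj⟩) Γ).symm
  · obtain ⟨q, p, hqp, h⟩ := exists_adj_of_not_injective hπ hinj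
    let p' : {w // w ≠ q} := ⟨p, hqp.ne'⟩
    have hcomp : (π ∘ Subtype.val) ∘ collapse p' = π := comp_collapse h
    have embeds := ih _ (hn ▸ Finite.card_subtype_lt (not_not.2 rfl)) (Γ.map (collapse p'))
      (π ∘ Subtype.val)
      (fun v ↦ connected_fiber_map (collapse_surjective p') (hcomp.symm ▸ hπ v)) rfl
    rw [map_map, hcomp] at embeds
    obtain ⟨φ, hφ⟩ := embeds
    exact ⟨(ofCollapse Γ p').comp φ, (ofCollapse_injective hqp).comp hφ⟩

/-- The graph obtained from `Λ` by replacing each vertex `v` by a clique `{v} × V` and joining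
`(v, w)` to `(w, v)` for each edge `vw` of `Λ`. -/
def cliqueExpansion {V : Type*} (Λ : SimpleGraph V) : SimpleGraph (V × V) where
  Adj e f := e.1 = f.1 ∧ e.2 ≠ f.2 ∨ f = e.swap ∧ Λ.Adj e.1 e.2
  symm := ⟨by grind [Prod.swap, SimpleGraph.adj_comm]⟩
  loopless := ⟨by grind [Prod.swap, SimpleGraph.irrefl]⟩

theorem map_fst_cliqueExpansion {V : Type*} (Λ : SimpleGraph V) :
    (cliqueExpansion Λ).map Prod.fst = Λ := by
  ext v w
  constructor
  · rintro ⟨hne, e, f, ⟨h, -⟩ | ⟨rfl, h⟩, rfl, rfl⟩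
    · exact absurd h hne
    · exact h
  · exact fun h ↦ ⟨h.ne, (v, w), (w, v), .inr ⟨rfl, h⟩, rfl, rfl⟩

theorem connected_fiber_cliqueExpansion {V : Type*} (Λ : SimpleGraph V) (v : V) :
    ((cliqueExpansion Λ).induce (Prod.fst ⁻¹' {v})).Connected := by
  have : Nonempty (Prod.fst ⁻¹' {v} : Set (V × V)) := ⟨⟨(v, v), rfl⟩⟩
  have top_le : ⊤ ≤ (cliqueExpansion Λ).induce (Prod.fst ⁻¹' {v}) := by
    intro e f hne
    have hfst : e.1.1 = f.1.1 := e.2.trans f.2.symm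
    exact .inl ⟨hfst, fun hsnd ↦ hne (Subtype.ext (Prod.ext hfst hsnd))⟩
  exact connected_top.mono top_le

theorem not_star_isIndContained_cliqueExpansion {V : Type*} (Λ : SimpleGraph V) :
    ¬ completeBipartiteGraph Unit (Fin 3) ⊴ cliqueExpansion Λ := by
  rintro ⟨f⟩
  let center := f (.inl ())
  let leaf (i : Fin 3) := f (.inr i)
  have leaf_injective : Function.Injective leaf := f.injective.comp Sum.inr_injective
  have adj_leaf (i : Fin 3) : (cliqueExpansion Λ).Adj center (leaf i) :=
    f.map_adj_iff.2 (by simp)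
  have not_adj_leaf (i j : Fin 3) : ¬ (cliqueExpansion Λ).Adj (leaf i) (leaf j) :=
    mt f.map_adj_iff.1 (by simp)
  obtain ⟨i, j, hij, h⟩ := Fintype.exists_ne_map_eq_of_card_lt
    (fun i ↦ (leaf i).1 = center.1) (by simp)
  by_cases hi : (leaf i).1 = center.1
  · have hj : (leaf j).1 = center.1 := h.mp hi
    refine not_adj_leaf i j (.inl ⟨hi.trans hj.symm, fun h₂ ↦ ?_⟩)
    exact leaf_injective.ne hij (Prod.ext (hi.trans hj.symm) h₂)
  · have leaf_eq (k : Fin 3) (hk : (leaf k).1 ≠ center.1) : leaf k = center.swap :=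
      ((adj_leaf k).resolve_left fun hadj ↦ hk hadj.1.symm).1
    exact leaf_injective.ne hij ((leaf_eq i hi).trans (leaf_eq j (mt h.mpr hi)).symm)

theorem star_isIndContained {V ι : Type*} {Λ : SimpleGraph V} {x : V}
    (e : ι ↪ Λ.neighborSet x) (hx : Λ.IsIndepSet (Λ.neighborSet x)) :
    completeBipartiteGraph Unit ι ⊴ Λ := by
  have not_adj (i j : ι) : ¬ Λ.Adj (e i) (e j) := fun h ↦ hx (e i).2 (e j).2 h.ne h
  refine ⟨⟨⟨Sum.elim (fun _ ↦ x) (fun i ↦ e i), ?_⟩, ?_⟩⟩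
  · exact Function.Injective.sumElim (Function.injective_of_subsingleton _)
      (Subtype.val_injective.comp e.injective) fun _ i ↦ Adj.ne (e i).2
  · have adj (i : ι) : Λ.Adj x (e i) := (e i).2
    rintro (_ | i) (_ | j) <;> simp [not_adj, adj, (adj _).symm]

theorem GG.exists_injective_cliqueExpansion {V : Type} [Finite V] (Λ : SimpleGraph V) :
    ∃ φ : GG Λ →* GG (cliqueExpansion Λ), Function.Injective φ := by
  have h := exists_injective_of_connected_fibers (cliqueExpansion Λ) Prod.fst
    (connected_fiber_cliqueExpansion Λ)
  rwa [map_fst_cliqueExpansion] at h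

theorem statement17_general {V : Type} [Finite V] (Λ : SimpleGraph V)
    (hclaw : completeBipartiteGraph Unit (Fin 3) ⊴ Λ) :
    ∃ (W : Type) (_ : Fintype W) (Γ : SimpleGraph W),
      (∃ φ : GG Λ →* GG Γ, Function.Injective φ) ∧ ¬ Nonempty (Λ ↪g Γ) :=
  ⟨V × V, Fintype.ofFinite _, cliqueExpansion Λ, GG.exists_injective_cliqueExpansion Λ,
    fun h ↦ not_star_isIndContained_cliqueExpansion Λ (hclaw.trans h)⟩

/-- If `Λ` has maximum degree exactly 3 and the link of every degree-3 vertex contains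
no edge, then there is a finite graph `Γ` with `G(Λ) ↪ G(Γ)` but `Λ` not an induced
subgraph of `Γ`. -/
theorem statement17 {V : Type} [Fintype V] (Λ : SimpleGraph V)
    (hmax : ∀ v : V, (Λ.neighborSet v).ncard ≤ 3)
    (hthree : ∃ v : V, (Λ.neighborSet v).ncard = 3)
    (hlink : ∀ x : V, (Λ.neighborSet x).ncard = 3 →
      ∀ a b : V, Λ.Adj x a → Λ.Adj x b → ¬ Λ.Adj a b) :
    ∃ (W : Type) (_ : Fintype W) (Γ : SimpleGraph W),
      (∃ φ : GG Λ →* GG Γ, Function.Injective φ) ∧ ¬ Nonempty (Λ ↪g Γ) := by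
  obtain ⟨x, hx⟩ := hthree
  have e : Fin 3 ≃ Λ.neighborSet x := (finCongr hx.symm).trans (Finite.equivFin _).symm
  exact statement17_general Λ <| star_isIndContained e.toEmbedding fun a ha b hb _ ↦
    hlink x hx a b ha hb
end
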